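/- arXiv:1812.01332 — 7 statements merged into one kernel-verified Lean document; each statement's English description precedes it below -/
import Mathlib

section
/- Let n ≥ 1, let a : Fin n → ℝ, let ε > 0, and fix an index i. If there is no index j with a i < a j < a i + ε, then every point of S(a, ε) = {L_k : k} ∪ {T_k : k} lies on or above the line ℓ_i through L_i with slope 2·(a i) + ε; that is, for every point (x, y) in S(a, ε), y ≥ (a i)² + (2·(a i) + ε)(x − a i). Moreover L_i and T_i both lie exactly on this line. -/
/-!
The line `ℓ_i` is the secant of the parabola `y = x²` through its points over `a i` and `a i + ε`,
so the parabola dips below it exactly between these two abscissae, where no `L_k` lies.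
All points `T_k` lie on the parabola `y = x² + ε²/4`, and `ℓ_i` is its tangent at `T_i`.
-/

/-- The height at `x` of the secant of the parabola `y = x²` through its points over `c` and
`c + ε`; the line `ℓ_i` is the graph of `sqSecant (a i) ε`. The slope is written `2 * c + ε`
rather than as a difference quotient, so that `ε = 0` gives the tangent at `c`. -/
def sqSecant {R : Type*} [CommRing R] (c ε x : R) : R :=
  c ^ 2 + (2 * c + ε) * (x - c)

section CommRing

variable {R : Type*} [CommRing R]

theorem sq_sub_sqSecant (c ε x : R) : x ^ 2 - sqSecant c ε x = (x - c) * (x - (c + ε)) := by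
  rw [sqSecant]
  ring

theorem sqSecant_self (c ε : R) : sqSecant c ε c = c ^ 2 := by
  simp [sqSecant]

theorem sqSecant_le_sq_iff [LinearOrder R] [IsStrictOrderedRing R] {c ε x : R} (hε : 0 ≤ ε) :
    sqSecant c ε x ≤ x ^ 2 ↔ x ∉ Set.Ioo c (c + ε) := by
  rw [← sub_nonneg, sq_sub_sqSecant, sub_mul_sub_nonneg_iff x (le_add_of_nonneg_right hε),
    Set.mem_Ioo, not_and_or, not_lt, not_lt]

end CommRing

section Field

variable {K : Type*} [Field K]

theorem sq_add_sq_div_four_sub_sqSecant [NeZero (2 : K)] (c ε x : K) :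
    x ^ 2 + ε ^ 2 / 4 - sqSecant c ε x = (x - (c + ε / 2)) ^ 2 := by
  have four_eq : (4 : K) = 2 ^ 2 := by norm_num
  rw [sqSecant, four_eq]
  field_simp
  ring

theorem sqSecant_add_half [NeZero (2 : K)] (c ε : K) :
    sqSecant c ε (c + ε / 2) = (c + ε / 2) ^ 2 + ε ^ 2 / 4 := by
  have tangency := sq_add_sq_div_four_sub_sqSecant c ε (c + ε / 2)
  rw [sub_self, zero_pow two_ne_zero] at tangency
  exact (sub_eq_zero.mp tangency).symm

variable [LinearOrder K] [IsStrictOrderedRing K]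

theorem sqSecant_le_sq_add_sq_div_four (c ε x : K) :
    sqSecant c ε x ≤ x ^ 2 + ε ^ 2 / 4 := by
  rw [← sub_nonneg, sq_add_sq_div_four_sub_sqSecant]
  exact sq_nonneg _

theorem all_points_on_or_above_line_general {ι : Type*} (a : ι → K) {ε : K} (hε : 0 ≤ ε) (i : ι)
    (h : ¬∃ j, a i < a j ∧ a j < a i + ε) :
    (∀ p ∈ {q : K × K | ∃ k, q = (a k, a k ^ 2)} ∪
        {q : K × K | ∃ k, q = (a k + ε / 2, (a k + ε / 2) ^ 2 + ε ^ 2 / 4)},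
      sqSecant (a i) ε p.1 ≤ p.2) ∧
    a i ^ 2 = sqSecant (a i) ε (a i) ∧
    (a i + ε / 2) ^ 2 + ε ^ 2 / 4 = sqSecant (a i) ε (a i + ε / 2) := by
  refine ⟨?_, (sqSecant_self _ _).symm, (sqSecant_add_half _ _).symm⟩
  rintro p (⟨k, rfl⟩ | ⟨k, rfl⟩)
  · exact (sqSecant_le_sq_iff hε).mpr fun hk ↦ h ⟨k, hk⟩
  · exact sqSecant_le_sq_add_sq_div_four _ _ _

end Field

theorem all_points_on_or_above_line (n : ℕ) (hn : 1 ≤ n) (a : Fin n → ℝ) (ε : ℝ)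
    (hε : 0 < ε) (i : Fin n)
    (h : ¬∃ j : Fin n, a i < a j ∧ a j < a i + ε) :
    (∀ p ∈ ({q : ℝ × ℝ | ∃ k : Fin n, q = (a k, (a k)^2)} ∪
            {q : ℝ × ℝ | ∃ k : Fin n, q = (a k + ε/2, (a k + ε/2)^2 + ε^2/4)}),
      p.2 ≥ (a i)^2 + (2 * a i + ε) * (p.1 - a i)) ∧
    (a i, (a i)^2).2 = (a i)^2 + (2 * a i + ε) * ((a i, (a i)^2).1 - a i) ∧
    (a i + ε/2, (a i + ε/2)^2 + ε^2/4).2 =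
      (a i)^2 + (2 * a i + ε) * ((a i + ε/2, (a i + ε/2)^2 + ε^2/4).1 - a i) :=
  all_points_on_or_above_line_general a hε.le i h
end

section
/- Let n ≥ 1, let a : Fin n → ℝ, and let ε > 0. If there are no indices i, j with a i < a j < a i + ε, then no point of S(a, ε) lies in the topological interior of the convex hull of S(a, ε); that is, for every p ∈ S(a, ε), p ∉ interior(convexHull ℝ S(a, ε)). -/
/-!
Lift a point `x` of weight `w` to `(x, ‖x‖ ^ 2 + w)`. The lift of `(y, v)` lies on or above the
hyperplane of slope `2 * x` through the lift of `(x, w)` exactly when `w ≤ ‖y - x‖ ^ 2 + v`, and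
if this holds for all `(y, v)`, that hyperplane supports the convex hull of the lifts.

The set in question consists of the lifts of `a k` with weight `0` and of `a k + ε / 2` with weight
`ε ^ 2 / 4`. The only inequality which is not immediate is the one for `x = a k + ε / 2` and
`y = a j`: it says that their distance is at least `ε / 2`, that is, `a j ∉ (a k, a k + ε)`.
-/

open Set

theorem notMem_interior_convexHull_of_isMinOn {E : Type*} [AddCommGroup E] [Module ℝ E]
    [TopologicalSpace E] [ContinuousAdd E] [ContinuousSMul ℝ E] {f : E →L[ℝ] ℝ} (hf : f ≠ 0)
    {s : Set E} {p : E} (hmin : IsMinOn f s p) : p ∉ interior (convexHull ℝ s) := by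
  intro hp
  have hull_subset : convexHull ℝ s ⊆ f ⁻¹' Ici (f p) :=
    convexHull_min hmin (convex_halfSpace_ge f.toLinearMap.isLinear (f p))
  have hlt : f p ∈ interior (Ici (f p)) :=
    (f.isOpenMap_of_ne_zero hf).mapsTo_interior hull_subset hp
  rw [interior_Ici] at hlt
  exact self_notMem_Ioi hlt

theorem notMem_interior_convexHull_of_sub_norm_sq_le {E : Type*} [NormedAddCommGroup E]
    [InnerProductSpace ℝ E] {s : Set (E × ℝ)} {p : E × ℝ}
    (h : ∀ q ∈ s, p.2 - ‖p.1‖ ^ 2 ≤ ‖q.1 - p.1‖ ^ 2 + (q.2 - ‖q.1‖ ^ 2)) :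
    p ∉ interior (convexHull ℝ s) := by
  let f : E × ℝ →L[ℝ] ℝ := .snd ℝ E ℝ - (2 : ℝ) • (innerSL ℝ p.1).comp (.fst ℝ E ℝ)
  have f_apply (q : E × ℝ) : f q = q.2 - 2 * inner ℝ p.1 q.1 := rfl
  have f_ne_zero : f ≠ 0 := fun hf => by simpa [f_apply] using DFunLike.congr_fun hf (0, 1)
  refine notMem_interior_convexHull_of_isMinOn f_ne_zero (isMinOn_iff.2 fun q hq => ?_)
  have hpq := h q hq
  rw [norm_sub_sq_real, real_inner_comm] at hpq
  simp only [f_apply, real_inner_self_eq_norm_sq]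
  linarith

theorem sq_le_sub_sq_of_notMem_Ioo {R : Type*} [CommRing R] [LinearOrder R] [IsStrictOrderedRing R]
    {x c r : R} (hr : 0 ≤ r) (hx : x ∉ Ioo (c - r) (c + r)) : r ^ 2 ≤ (x - c) ^ 2 := by
  contrapose! hx
  obtain ⟨hleft, hright⟩ := abs_lt_of_sq_lt_sq' hx hr
  exact ⟨by linarith, by linarith⟩

theorem no_point_in_interior_of_hull_general {ι : Type*} (a : ι → ℝ) {ε : ℝ} (hε : 0 ≤ ε)
    (h : ¬∃ i j : ι, a i < a j ∧ a j < a i + ε) :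
    ∀ p ∈ ({q : ℝ × ℝ | ∃ k : ι, q = (a k, (a k)^2)} ∪
           {q : ℝ × ℝ | ∃ k : ι, q = (a k + ε/2, (a k + ε/2)^2 + ε^2/4)}),
      p ∉ interior (convexHull ℝ
        ({q : ℝ × ℝ | ∃ k : ι, q = (a k, (a k)^2)} ∪
         {q : ℝ × ℝ | ∃ k : ι, q = (a k + ε/2, (a k + ε/2)^2 + ε^2/4)})) := by
  have sq_gap (j k : ι) : (ε / 2) ^ 2 ≤ (a j - (a k + ε / 2)) ^ 2 :=
    sq_le_sub_sq_of_notMem_Ioo (by positivity) fun hj =>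
      h ⟨k, j, by linarith [hj.1], by linarith [hj.2]⟩
  intro p hp
  refine notMem_interior_convexHull_of_sub_norm_sq_le fun q hq => ?_
  simp only [Real.norm_eq_abs, sq_abs]
  rcases hp with ⟨k, rfl⟩ | ⟨k, rfl⟩ <;> rcases hq with ⟨j, rfl⟩ | ⟨j, rfl⟩
  · linarith [sq_nonneg (a j - a k)]
  · linarith [sq_nonneg (a j + ε / 2 - a k), sq_nonneg ε]
  · linarith [sq_gap j k]
  · linarith [sq_nonneg (a j + ε / 2 - (a k + ε / 2))]

theorem no_point_in_interior_of_hull (n : ℕ) (hn : 1 ≤ n) (a : Fin n → ℝ) (ε : ℝ)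
    (hε : 0 < ε)
    (h : ¬∃ i j : Fin n, a i < a j ∧ a j < a i + ε) :
    ∀ p ∈ ({q : ℝ × ℝ | ∃ k : Fin n, q = (a k, (a k)^2)} ∪
           {q : ℝ × ℝ | ∃ k : Fin n, q = (a k + ε/2, (a k + ε/2)^2 + ε^2/4)}),
      p ∉ interior (convexHull ℝ
        ({q : ℝ × ℝ | ∃ k : Fin n, q = (a k, (a k)^2)} ∪
         {q : ℝ × ℝ | ∃ k : Fin n, q = (a k + ε/2, (a k + ε/2)^2 + ε^2/4)})) :=
  no_point_in_interior_of_hull_general a hε.le h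
end

section
/- Let ε > 0 and let a, b ∈ ℝ with a < b. Then the point T_a = (a + ε/2, (a + ε/2)² + ε²/4) lies strictly below the line through L_a = (a, a²) and T_b = (b + ε/2, (b + ε/2)² + ε²/4); that is, writing m = ((b + ε/2)² + ε²/4 − a²)/((b + ε/2) − a) for the slope of that line, one has (a + ε/2)² + ε²/4 < a² + m·(ε/2). -/
/-!
Each `T_c` lies on the parabola `y = x² + (ε/2)²`, and the line through `L_a` and `T_a` is the
tangent to that parabola at `T_a`. By strict convexity `T_b` lies strictly above this tangent, so
turning the line about `L_a` until it meets `T_b` increases its slope and lifts it above `T_a`.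
-/

theorem tangent_line_lt_sq_add_sq {R : Type*} [CommRing R] [LinearOrder R] [IsStrictOrderedRing R]
    {a e x : R} (hx : x ≠ a + e) :
    a ^ 2 + 2 * (a + e) * (x - a) < x ^ 2 + e ^ 2 := by
  have gap : x ^ 2 + e ^ 2 - (a ^ 2 + 2 * (a + e) * (x - a)) = (x - (a + e)) ^ 2 := by ring
  rw [← sub_pos, gap]
  exact sq_pos_of_ne_zero (sub_ne_zero.mpr hx)

section OrderedField

variable {K : Type*} [Field K] [LinearOrder K] [IsStrictOrderedRing K]

theorem lt_secant_slope_of_line_lt {x₀ y₀ x y m : K} (hx : x₀ < x)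
    (hy : y₀ + m * (x - x₀) < y) : m < (y - y₀) / (x - x₀) :=
  (lt_div_iff₀ (sub_pos.mpr hx)).mpr (lt_sub_iff_add_lt'.mpr hy)

theorem Ta_below_line_La_Tb_general {ε a b : K} (hε : 0 < ε) (hab : a ≠ b)
    (hb : a < b + ε / 2) :
    (a + ε / 2) ^ 2 + ε ^ 2 / 4 <
      a ^ 2 + (((b + ε / 2) ^ 2 + ε ^ 2 / 4 - a ^ 2) / ((b + ε / 2) - a)) * (ε / 2) := by
  have quarter_sq : ε ^ 2 / 4 = (ε / 2) ^ 2 := by ring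
  have Tb_above_tangent :
      a ^ 2 + 2 * (a + ε / 2) * ((b + ε / 2) - a) < (b + ε / 2) ^ 2 + ε ^ 2 / 4 := by
    rw [quarter_sq]
    exact tangent_line_lt_sq_add_sq (by simpa using hab.symm)
  calc
    (a + ε / 2) ^ 2 + ε ^ 2 / 4 = a ^ 2 + 2 * (a + ε / 2) * (ε / 2) := by ring
    _ < a ^ 2 + (((b + ε / 2) ^ 2 + ε ^ 2 / 4 - a ^ 2) / ((b + ε / 2) - a)) * (ε / 2) := by
      gcongr
      exact lt_secant_slope_of_line_lt hb Tb_above_tangent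

end OrderedField

theorem Ta_below_line_La_Tb (ε a b : ℝ) (hε : 0 < ε) (hab : a < b) :
    (a + ε/2)^2 + ε^2/4 <
      a^2 + (((b + ε/2)^2 + ε^2/4 - a^2) / ((b + ε/2) - a)) * (ε/2) :=
  Ta_below_line_La_Tb_general hε hab.ne (by linarith)
end

section
/- Let ε > 0 and let a, b ∈ ℝ with a < b < a + ε. Then the point T_a = (a + ε/2, (a + ε/2)² + ε²/4) lies in the topological interior of the convex hull of the three points L_a = (a, a²), L_b = (b, b²), and T_b = (b + ε/2, (b + ε/2)² + ε²/4); that is, T_a ∈ interior(convexHull ℝ {L_a, L_b, T_b}). -/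
/-!
Put `d = b - a`. Then `(d + ε) • T_a = d • L_a + d • L_b + (ε - d) • T_b`, that is, `T_a` lies on
the segment from the midpoint of `L_a L_b` to `T_b`. For `0 < d < ε` all three weights are positive,
and the triangle is nondegenerate, twice its signed area being `d * ε * (d + ε) / 2`.
-/

open Finset Module

section Interior

variable {E : Type*} [NormedAddCommGroup E] [NormedSpace ℝ E]

theorem affineBasis_centerMass_mem_interior_convexHull {ι : Type*} [Fintype ι]
    (B : AffineBasis ι ℝ E) {w : ι → ℝ} (hw : ∀ i, 0 < w i) :
    univ.centerMass w B ∈ interior (convexHull ℝ (Set.range B)) := by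
  have : Nonempty ι := B.nonempty
  have sum_pos : 0 < ∑ i, w i := Finset.sum_pos (fun i _ ↦ hw i) univ_nonempty
  have sum_normalized : ∑ i, (∑ j, w j)⁻¹ * w i = 1 := by
    rw [← mul_sum, inv_mul_cancel₀ sum_pos.ne']
  have centerMass_eq : univ.centerMass w B =
      univ.affineCombination ℝ B (fun i ↦ (∑ j, w j)⁻¹ * w i) := by
    rw [affineCombination_eq_linear_combination _ _ _ sum_normalized, centerMass, smul_sum]
    simp only [mul_smul]
  rw [B.interior_convexHull]
  intro i
  rw [centerMass_eq, B.coord_apply_combination_of_mem (mem_univ i) sum_normalized]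
  exact mul_pos (inv_pos.mpr sum_pos) (hw i)

theorem mem_interior_convexHull_triple (hE : finrank ℝ E = 2) {p q r x : E}
    (hpqr : AffineIndependent ℝ ![p, q, r]) {u v w : ℝ} (hu : 0 < u) (hv : 0 < v) (hw : 0 < w)
    (hx : (u + v + w) • x = u • p + v • q + w • r) :
    x ∈ interior (convexHull ℝ {p, q, r}) := by
  have : FiniteDimensional ℝ E := .of_finrank_pos (hE ▸ two_pos)
  let B : AffineBasis (Fin 3) ℝ E :=
    ⟨![p, q, r], hpqr, hpqr.affineSpan_eq_top_iff_card_eq_finrank_add_one.mpr (by simp [hE])⟩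
  have range_B : Set.range B = {p, q, r} := by
    change Set.range ![p, q, r] = _
    simp only [Matrix.range_cons, Matrix.range_empty, Set.union_empty, Set.singleton_union]
  have weights_pos : ∀ i, 0 < ![u, v, w] i := by
    simp only [Fin.forall_fin_succ, Matrix.cons_val]
    exact ⟨hu, hv, hw, fun i ↦ i.elim0⟩
  have centerMass_eq : univ.centerMass ![u, v, w] B = x := by
    change univ.centerMass ![u, v, w] ![p, q, r] = x
    rw [centerMass, inv_smul_eq_iff₀ (sum_pos (fun i _ ↦ weights_pos i) univ_nonempty).ne']
    simpa only [Fin.sum_univ_three, Matrix.cons_val] using hx.symm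
  rw [← range_B, ← centerMass_eq]
  exact affineBasis_centerMass_mem_interior_convexHull B weights_pos

end Interior

section Plane

variable {R : Type*} [CommRing R] [NoZeroDivisors R]

theorem linearIndependent_pair_of_det_ne_zero {x y : R × R} (h : x.1 * y.2 - x.2 * y.1 ≠ 0) :
    LinearIndependent R ![x, y] := by
  rw [LinearIndependent.pair_iff]
  intro s t hst
  have fst_eq : s * x.1 + t * y.1 = 0 := congrArg Prod.fst hst
  have snd_eq : s * x.2 + t * y.2 = 0 := congrArg Prod.snd hst
  have s_mul_det : s * (x.1 * y.2 - x.2 * y.1) = 0 := by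
    linear_combination y.2 * fst_eq - y.1 * snd_eq
  have t_mul_det : t * (x.1 * y.2 - x.2 * y.1) = 0 := by
    linear_combination x.1 * snd_eq - x.2 * fst_eq
  exact ⟨(mul_eq_zero.mp s_mul_det).resolve_right h, (mul_eq_zero.mp t_mul_det).resolve_right h⟩

theorem affineIndependent_triple_of_det_ne_zero {p q r : R × R}
    (h : (q.1 - p.1) * (r.2 - p.2) - (q.2 - p.2) * (r.1 - p.1) ≠ 0) :
    AffineIndependent R ![p, q, r] := by
  rw [affineIndependent_iff_linearIndependent_vsub R _ 0,
    ← linearIndependent_equiv (finSuccAboveEquiv (0 : Fin 3))]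
  convert! linearIndependent_pair_of_det_ne_zero (x := q - p) (y := r - p) h using 1
  ext i <;> fin_cases i <;> rfl

end Plane

/-- The point `L_c` of the parabola `y = x ^ 2` with abscissa `c`. -/
def lowerPoint (c : ℝ) : ℝ × ℝ := (c, c ^ 2)

/-- The point `T_c`, at height `ε ^ 2 / 4` above the parabola `y = x ^ 2` and with abscissa
`c + ε / 2`. -/
noncomputable def upperPoint (ε c : ℝ) : ℝ × ℝ := (c + ε / 2, (c + ε / 2) ^ 2 + ε ^ 2 / 4)

theorem affineIndependent_lowerPoint_lowerPoint_upperPoint {ε a b : ℝ} (hε : ε ≠ 0) (hab : a ≠ b)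
    (h : b - a + ε ≠ 0) :
    AffineIndependent ℝ ![lowerPoint a, lowerPoint b, upperPoint ε b] := by
  apply affineIndependent_triple_of_det_ne_zero
  have det_eq : (b - a) * ((b + ε / 2) ^ 2 + ε ^ 2 / 4 - a ^ 2) - (b ^ 2 - a ^ 2) * (b + ε / 2 - a)
      = (b - a) * ε * (b - a + ε) / 2 := by ring
  have area_ne_zero : (b - a) * ε * (b - a + ε) / 2 ≠ 0 :=
    div_ne_zero (mul_ne_zero (mul_ne_zero (sub_ne_zero.mpr hab.symm) hε) h) two_ne_zero
  exact det_eq ▸ area_ne_zero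

theorem smul_upperPoint_eq (ε a b : ℝ) :
    (b - a + (b - a) + (a + ε - b)) • upperPoint ε a =
      (b - a) • lowerPoint a + (b - a) • lowerPoint b + (a + ε - b) • upperPoint ε b := by
  ext <;> simp only [lowerPoint, upperPoint, Prod.smul_mk, Prod.mk_add_mk, smul_eq_mul] <;> ring

theorem Ta_in_interior_triangle (ε a b : ℝ) (hε : 0 < ε) (hab : a < b)
    (hb : b < a + ε) :
    ((a + ε/2, (a + ε/2)^2 + ε^2/4) : ℝ × ℝ) ∈
      interior (convexHull ℝ
        ({((a, a^2) : ℝ × ℝ), ((b, b^2) : ℝ × ℝ),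
          ((b + ε/2, (b + ε/2)^2 + ε^2/4) : ℝ × ℝ)} : Set (ℝ × ℝ))) := by
  change upperPoint ε a ∈ interior (convexHull ℝ {lowerPoint a, lowerPoint b, upperPoint ε b})
  have sub_pos_ab : 0 < b - a := sub_pos.mpr hab
  have nondegenerate : AffineIndependent ℝ ![lowerPoint a, lowerPoint b, upperPoint ε b] :=
    affineIndependent_lowerPoint_lowerPoint_upperPoint hε.ne' hab.ne (add_pos sub_pos_ab hε).ne'
  exact mem_interior_convexHull_triple (by simp) nondegenerate sub_pos_ab sub_pos_ab
    (sub_pos.mpr hb) (smul_upperPoint_eq ε a b)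
end

section
/- Let n ≥ 1, let a : Fin n → ℝ, let ε > 0, and suppose there exist indices i, j with a i < a j < a i + ε. Then the point T_i lies in the topological interior of the convex hull of S(a, ε); in particular S(a, ε) contains a point that does not lie on the boundary of its convex hull. -/
/-!
With `d = a j - a i`, one has `(d + ε) T_i = d L_i + d L_j + (ε - d) T_j`. All three weights are
positive since `0 < d < ε`, and the triangle `L_i L_j T_j` is nondegenerate, its doubled area being
`d ε (d + ε) / 2`; hence `T_i` is interior to this triangle.
-/

section Simplex

open Finset

variable {ι E : Type*} [Fintype ι] [NormedAddCommGroup E] [NormedSpace ℝ E] {w : ι → ℝ}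

theorem centerMass_mem_interior_convexHull_affineBasis (b : AffineBasis ι ℝ E)
    (hw : ∀ i, 0 < w i) : univ.centerMass w b ∈ interior (convexHull ℝ (Set.range b)) := by
  have := b.nonempty
  have hsum : 0 < ∑ i, w i := sum_pos (fun i _ ↦ hw i) univ_nonempty
  have hnormalized : ∑ i, ((∑ k, w k)⁻¹ • w) i = 1 := by
    simp only [Pi.smul_apply, smul_eq_mul, ← mul_sum, inv_mul_cancel₀ hsum.ne']
  rw [b.interior_convexHull, ← centerMass_smul_left (R := ℝ) (hc := inv_ne_zero hsum.ne'),
    ← affineCombination_eq_centerMass hnormalized]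
  intro i
  rw [b.coord_apply_combination_of_mem (mem_univ i) hnormalized]
  exact mul_pos (inv_pos.2 hsum) (hw i)

theorem centerMass_mem_interior_convexHull_of_affineIndependent [FiniteDimensional ℝ E] {p : ι → E}
    (hp : AffineIndependent ℝ p) (hcard : Fintype.card ι = Module.finrank ℝ E + 1)
    (hw : ∀ i, 0 < w i) : univ.centerMass w p ∈ interior (convexHull ℝ (Set.range p)) :=
  centerMass_mem_interior_convexHull_affineBasis
    ⟨p, hp, hp.affineSpan_eq_top_iff_card_eq_finrank_add_one.2 hcard⟩ hw

end Simplex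

theorem linearIndependent_pair_of_det_ne_zero_s10 {R : Type*} [CommRing R] [NoZeroDivisors R]
    {v w : R × R} (h : v.1 * w.2 - v.2 * w.1 ≠ 0) : LinearIndependent R ![v, w] := by
  rw [LinearIndependent.pair_iff]
  intro s t hst
  have hfst : s * v.1 + t * w.1 = 0 := congrArg Prod.fst hst
  have hsnd : s * v.2 + t * w.2 = 0 := congrArg Prod.snd hst
  have hs : s * (v.1 * w.2 - v.2 * w.1) = 0 := by linear_combination w.2 * hfst - w.1 * hsnd
  have ht : t * (v.1 * w.2 - v.2 * w.1) = 0 := by linear_combination v.1 * hsnd - v.2 * hfst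
  exact ⟨(mul_eq_zero.1 hs).resolve_right h, (mul_eq_zero.1 ht).resolve_right h⟩

theorem affineIndependent_of_linearIndependent_vsub_pair {R V P : Type*} [Ring R] [AddCommGroup V]
    [Module R V] [AddTorsor V P] {p q r : P} (h : LinearIndependent R ![q -ᵥ p, r -ᵥ p]) :
    AffineIndependent R ![p, q, r] := by
  rw [affineIndependent_iff_linearIndependent_vsub R _ 0,
    ← linearIndependent_equiv (finSuccAboveEquiv (0 : Fin 3))]
  convert h using 1
  ext k
  fin_cases k <;> rfl

/-- The point `L_k` of the problem for `x = a k`: the point of the parabola `y = x²` above `x`. -/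
def parabolaPoint (x : ℝ) : ℝ × ℝ := (x, x ^ 2)

/-- The point `T_k` of the problem for `x = a k`: the midpoint of the chord of the parabola
`y = x²` over `[x, x + ε]`. It is given in coordinates, as in the problem. -/
noncomputable def chordMidpoint (ε x : ℝ) : ℝ × ℝ := (x + ε / 2, (x + ε / 2) ^ 2 + ε ^ 2 / 4)

section Triangle

variable {x y ε : ℝ}

theorem affineIndependent_parabolaPoint_chordMidpoint (hxy : x < y) (hε : 0 < ε) :
    AffineIndependent ℝ ![parabolaPoint x, parabolaPoint y, chordMidpoint ε y] := by
  apply affineIndependent_of_linearIndependent_vsub_pair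
  apply linearIndependent_pair_of_det_ne_zero_s10
  have hdet : 0 < (y - x) * ε * (y - x + ε) / 2 := by
    have := sub_pos.2 hxy
    positivity
  convert hdet.ne' using 1
  simp only [parabolaPoint, chordMidpoint, vsub_eq_sub, Prod.fst_sub, Prod.snd_sub]
  ring

theorem centerMass_parabolaPoint_chordMidpoint (h : y - x + ε ≠ 0) :
    Finset.univ.centerMass ![y - x, y - x, x + ε - y]
      ![parabolaPoint x, parabolaPoint y, chordMidpoint ε y] = chordMidpoint ε x := by
  have hsum : y - x + (y - x) + (x + ε - y) = y - x + ε := by ring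
  simp only [Finset.centerMass, Fin.sum_univ_three, Matrix.cons_val, hsum]
  rw [inv_smul_eq_iff₀ h]
  ext <;>
    simp only [parabolaPoint, chordMidpoint, Prod.fst_add, Prod.snd_add, Prod.smul_fst,
      Prod.smul_snd, smul_eq_mul] <;>
    ring

theorem chordMidpoint_mem_interior_convexHull (hxy : x < y) (hy : y < x + ε) :
    chordMidpoint ε x ∈
      interior (convexHull ℝ {parabolaPoint x, parabolaPoint y, chordMidpoint ε y}) := by
  have hε : 0 < ε := by linarith
  have hweights : ∀ k, 0 < ![y - x, y - x, x + ε - y] k := by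
    simp [Fin.forall_fin_succ, hxy, hy]
  have hmem := centerMass_mem_interior_convexHull_of_affineIndependent
    (affineIndependent_parabolaPoint_chordMidpoint hxy hε) (by simp) hweights
  rw [centerMass_parabolaPoint_chordMidpoint (by linarith)] at hmem
  simpa only [Matrix.range_cons, Matrix.range_empty, Set.union_empty, Set.singleton_union]
    using hmem

end Triangle

theorem Ti_in_interior_of_hull_general {ι : Sort*} (a : ι → ℝ) (ε : ℝ) (i j : ι)
    (hij : a i < a j) (hj : a j < a i + ε) :
    ((a i + ε/2, (a i + ε/2)^2 + ε^2/4) : ℝ × ℝ) ∈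
      interior (convexHull ℝ
        ({q : ℝ × ℝ | ∃ k : ι, q = (a k, (a k)^2)} ∪
         {q : ℝ × ℝ | ∃ k : ι, q = (a k + ε/2, (a k + ε/2)^2 + ε^2/4)})) := by
  refine interior_mono (convexHull_mono ?_) (chordMidpoint_mem_interior_convexHull hij hj)
  rintro _ (rfl | rfl | rfl)
  · exact Or.inl ⟨i, rfl⟩
  · exact Or.inl ⟨j, rfl⟩
  · exact Or.inr ⟨j, rfl⟩

theorem Ti_in_interior_of_hull (n : ℕ) (hn : 1 ≤ n) (a : Fin n → ℝ) (ε : ℝ)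
    (hε : 0 < ε) (i j : Fin n) (hij : a i < a j) (hj : a j < a i + ε) :
    ((a i + ε/2, (a i + ε/2)^2 + ε^2/4) : ℝ × ℝ) ∈
      interior (convexHull ℝ
        ({q : ℝ × ℝ | ∃ k : Fin n, q = (a k, (a k)^2)} ∪
         {q : ℝ × ℝ | ∃ k : Fin n, q = (a k + ε/2, (a k + ε/2)^2 + ε^2/4)})) :=
  Ti_in_interior_of_hull_general a ε i j hij hj
end

section
/- Let n ≥ 1, let a : Fin n → ℝ, let ε > 0, and suppose there exist indices i, j with a i < a j ≤ a i + ε. Then the point T_i is not an extreme point of the convex hull of S(a, ε); that is, T_i ∉ extremePoints ℝ (convexHull ℝ S(a, ε)). -/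
/-!
The point `T_k` is the midpoint of the chord of the parabola `y = x ^ 2` over `[a k, a k + ε]`,
whose left endpoint is `L_k`. The chords starting at `L_i` and `L_j` cross at abscissa
`(a i + a j + ε) / 2`, midway between those of `T_i` and `T_j`. Since `a j ≤ a i + ε`, the crossing
point lies on the segment from `L_j` to `T_j`, hence in the convex hull; since `a i < a j`, it lies
strictly beyond `T_i` on the chord from `L_i`.
-/

section Secant

variable {𝕜 : Type*} [Field 𝕜]

/-- The secant of the parabola `y = x ^ 2` through the points of abscissas `p` and `q` (the tangent
if `p = q`). It is parametrized by abscissa, so that betweenness of its points is betweenness of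
scalars. -/
def parabolaSecant (p q : 𝕜) : 𝕜 →ᵃ[𝕜] 𝕜 × 𝕜 :=
  (AffineMap.id 𝕜 𝕜).prod ((p + q) • AffineMap.id 𝕜 𝕜 - AffineMap.const 𝕜 𝕜 (p * q))

theorem parabolaSecant_apply (p q s : 𝕜) : parabolaSecant p q s = (s, (p + q) * s - p * q) :=
  rfl

theorem parabolaSecant_injective (p q : 𝕜) : Function.Injective (parabolaSecant p q) :=
  fun _ _ h ↦ congrArg Prod.fst h

theorem parabolaSecant_apply_left (p q : 𝕜) : parabolaSecant p q p = (p, p ^ 2) := by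
  rw [parabolaSecant_apply]
  ring_nf

variable [NeZero (2 : 𝕜)]

theorem parabolaSecant_add_apply_add_half (x ε : 𝕜) :
    parabolaSecant x (x + ε) (x + ε / 2) = (x + ε / 2, (x + ε / 2) ^ 2 + ε ^ 2 / 4) := by
  rw [parabolaSecant_apply, show (4 : 𝕜) = 2 * 2 by norm_num]
  congr 1
  field_simp
  ring

theorem parabolaSecant_add_apply_crossing (x y ε : 𝕜) :
    parabolaSecant x (x + ε) ((x + y + ε) / 2) = parabolaSecant y (y + ε) ((x + y + ε) / 2) := by
  simp only [parabolaSecant_apply]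
  congr 1
  field_simp
  ring

end Secant

section ExtremePoints

variable {𝕜 : Type*} [Field 𝕜] [LinearOrder 𝕜] [IsStrictOrderedRing 𝕜]

theorem affineMap_apply_notMem_extremePoints {E : Type*} [AddCommGroup E] [Module 𝕜 E]
    {f : 𝕜 →ᵃ[𝕜] E} (hf : Function.Injective f) {C : Set E} {r s t : 𝕜}
    (hr : f r ∈ C) (ht : f t ∈ C) (hrs : r < s) (hst : s < t) :
    f s ∉ C.extremePoints 𝕜 := by
  intro hs
  have hmem : f s ∈ openSegment 𝕜 (f r) (f t) := by
    rw [← image_openSegment]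
    exact Set.mem_image_of_mem f (Ioo_subset_openSegment ⟨hrs, hst⟩)
  exact hrs.ne (hf (hs.2 hr ht hmem))

variable {x y ε : 𝕜} {C : Set (𝕜 × 𝕜)}

theorem parabolaSecant_add_apply_crossing_mem (hC : Convex 𝕜 C) (hL : (y, y ^ 2) ∈ C)
    (hT : (y + ε / 2, (y + ε / 2) ^ 2 + ε ^ 2 / 4) ∈ C) (hxy : x ≤ y) (hyx : y ≤ x + ε) :
    parabolaSecant x (x + ε) ((x + y + ε) / 2) ∈ C := by
  rw [parabolaSecant_add_apply_crossing]
  rw [← parabolaSecant_apply_left y (y + ε)] at hL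
  rw [← parabolaSecant_add_apply_add_half] at hT
  have hconn := (hC.affine_preimage (parabolaSecant y (y + ε))).ordConnected
  exact hconn.out hL hT ⟨by linarith, by linarith⟩

theorem parabolaChord_midpoint_notMem_extremePoints (hC : Convex 𝕜 C) (hLx : (x, x ^ 2) ∈ C)
    (hLy : (y, y ^ 2) ∈ C) (hTy : (y + ε / 2, (y + ε / 2) ^ 2 + ε ^ 2 / 4) ∈ C)
    (hxy : x < y) (hyx : y ≤ x + ε) :
    (x + ε / 2, (x + ε / 2) ^ 2 + ε ^ 2 / 4) ∉ C.extremePoints 𝕜 := by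
  have hcross := parabolaSecant_add_apply_crossing_mem hC hLy hTy hxy.le hyx
  rw [← parabolaSecant_apply_left x (x + ε)] at hLx
  rw [← parabolaSecant_add_apply_add_half]
  exact affineMap_apply_notMem_extremePoints (parabolaSecant_injective x (x + ε)) hLx hcross
    (by linarith) (by linarith)

theorem Ti_not_extreme_general {ι : Sort*} (a : ι → 𝕜) {i j : ι} (hij : a i < a j)
    (hj : a j ≤ a i + ε) :
    (a i + ε / 2, (a i + ε / 2) ^ 2 + ε ^ 2 / 4) ∉
      Set.extremePoints 𝕜 (convexHull 𝕜
        ({q : 𝕜 × 𝕜 | ∃ k, q = (a k, a k ^ 2)} ∪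
         {q : 𝕜 × 𝕜 | ∃ k, q = (a k + ε / 2, (a k + ε / 2) ^ 2 + ε ^ 2 / 4)})) :=
  parabolaChord_midpoint_notMem_extremePoints (convex_convexHull 𝕜 _)
    (subset_convexHull 𝕜 _ (.inl ⟨i, rfl⟩)) (subset_convexHull 𝕜 _ (.inl ⟨j, rfl⟩))
    (subset_convexHull 𝕜 _ (.inr ⟨j, rfl⟩)) hij hj

end ExtremePoints

theorem Ti_not_extreme (n : ℕ) (hn : 1 ≤ n) (a : Fin n → ℝ) (ε : ℝ)
    (hε : 0 < ε) (i j : Fin n) (hij : a i < a j) (hj : a j ≤ a i + ε) :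
    ((a i + ε/2, (a i + ε/2)^2 + ε^2/4) : ℝ × ℝ) ∉
      Set.extremePoints ℝ (convexHull ℝ
        ({q : ℝ × ℝ | ∃ k : Fin n, q = (a k, (a k)^2)} ∪
         {q : ℝ × ℝ | ∃ k : Fin n, q = (a k + ε/2, (a k + ε/2)^2 + ε^2/4)})) :=
  Ti_not_extreme_general a hij hj
end

section
/- Let n ≥ 1, let a : Fin n → ℝ, and let ε > 0. Assume there are no indices i, j with 0 < a j − a i < ε. Define the perturbed numbers a' i = a i + ε·(i + 1)/(2n) for i ∈ Fin n (so the perturbations are ε/(2n), 2ε/(2n), …, nε/(2n)). Then there exist distinct indices i ≠ j with a i = a j if and only if there exist indices i, j with 0 < a' j − a' i < ε/2. -/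
/-! Perturbations `p i` that are pairwise distinct and differ by less than `δ` separate equal values
of `a` by a nonzero amount below `δ`. Conversely, if `a + p` takes two values less than `δ` apart,
then the corresponding values of `a` are less than `2δ` apart, so they coincide when `a` has no gap
strictly between `0` and `2δ`. -/

section OrderedGroup

variable {ι G : Type*} [AddCommGroup G] [LinearOrder G] [IsOrderedAddMonoid G]
  {a p : ι → G} {δ : G} {i j : ι}

theorem exists_add_sub_add_pos_lt_of_eq (hp : Function.Injective p)
    (hpδ : ∀ i j, p j - p i < δ) (hij : i ≠ j) (ha : a i = a j) :
    ∃ k l, 0 < (a l + p l) - (a k + p k) ∧ (a l + p l) - (a k + p k) < δ := by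
  wlog hlt : p i < p j generalizing i j
  · exact this hij.symm ha.symm ((hp.ne hij).lt_or_gt.resolve_left hlt)
  have hdiff : (a j + p j) - (a i + p i) = p j - p i := by rw [ha, add_sub_add_left_eq_sub]
  exact ⟨i, j, hdiff ▸ sub_pos.mpr hlt, hdiff ▸ hpδ i j⟩

theorem sub_lt_add_of_add_sub_add_lt (hp : p i - p j < δ)
    (hlt : (a j + p j) - (a i + p i) < δ) : a j - a i < δ + δ :=
  calc
    a j - a i = ((a j + p j) - (a i + p i)) + (p i - p j) := by abel
    _ < δ + δ := add_lt_add hlt hp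

theorem eq_of_not_exists_sub_pos_lt {ε : G}
    (h : ¬∃ i j, 0 < a j - a i ∧ a j - a i < ε)
    (hij : a j - a i < ε) (hji : a i - a j < ε) : a i = a j := by
  apply le_antisymm <;> refine not_lt.mp fun hlt => h ?_
  · exact ⟨j, i, sub_pos.mpr hlt, hji⟩
  · exact ⟨i, j, sub_pos.mpr hlt, hij⟩

theorem perturbation_reduction_general (hp : Function.Injective p)
    (hpδ : ∀ i j, p j - p i < δ)
    (h : ¬∃ i j, 0 < a j - a i ∧ a j - a i < δ + δ) :
    (∃ i j, i ≠ j ∧ a i = a j) ↔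
      ∃ i j, 0 < (a j + p j) - (a i + p i) ∧ (a j + p j) - (a i + p i) < δ := by
  constructor
  · rintro ⟨i, j, hij, ha⟩
    exact exists_add_sub_add_pos_lt_of_eq hp hpδ hij ha
  · rintro ⟨i, j, hpos, hlt⟩
    have hne : i ≠ j := by
      rintro rfl
      exact hpos.ne' (sub_self _)
    have hswap : (a i + p i) - (a j + p j) < δ :=
      (sub_neg.mpr (sub_pos.mp hpos)).trans (hpos.trans hlt)
    exact ⟨i, j, hne, eq_of_not_exists_sub_pos_lt h
      (sub_lt_add_of_add_sub_add_lt (hpδ j i) hlt)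
      (sub_lt_add_of_add_sub_add_lt (hpδ i j) hswap)⟩

end OrderedGroup

section OrderedField

variable {K : Type*} [Field K] {n : ℕ} {ε : K}

/-- The perturbations `ε/(2n), 2ε/(2n), …, nε/(2n)`, the equally spaced points of `(0, ε/2]`.
The `+ 1` accounts for `Fin n` being indexed from `0`. -/
def equallySpacedOffset (ε : K) (i : Fin n) : K := ε * ((i : K) + 1) / (2 * n)

variable [LinearOrder K] [IsStrictOrderedRing K]

theorem equallySpacedOffset_pos (hε : 0 < ε) (i : Fin n) : 0 < equallySpacedOffset ε i := by
  have hn : (0 : K) < n := Nat.cast_pos.mpr i.pos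
  unfold equallySpacedOffset
  positivity

theorem equallySpacedOffset_le_half (hε : 0 ≤ ε) (i : Fin n) :
    equallySpacedOffset ε i ≤ ε / 2 := by
  have hn : (n : K) ≠ 0 := Nat.cast_ne_zero.mpr i.pos.ne'
  have hi : (i : K) + 1 ≤ n := mod_cast i.isLt
  calc
    ε * ((i : K) + 1) / (2 * n) ≤ ε * n / (2 * n) := by gcongr
    _ = ε / 2 := mul_div_mul_right ε 2 hn

theorem equallySpacedOffset_strictMono (hε : 0 < ε) :
    StrictMono (equallySpacedOffset ε : Fin n → K) := by
  intro i j hij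
  have hn : (0 : K) < n := Nat.cast_pos.mpr i.pos
  have hij' : (i : K) < j := mod_cast hij
  unfold equallySpacedOffset
  gcongr

theorem equallySpacedOffset_sub_lt_half (hε : 0 < ε) (i j : Fin n) :
    equallySpacedOffset ε j - equallySpacedOffset ε i < ε / 2 :=
  (sub_lt_self _ (equallySpacedOffset_pos hε i)).trans_le (equallySpacedOffset_le_half hε.le j)

end OrderedField

theorem perturbation_reduction (n : ℕ) (hn : 1 ≤ n) (a : Fin n → ℝ) (ε : ℝ)
    (hε : 0 < ε)
    (h : ¬∃ i j : Fin n, 0 < a j - a i ∧ a j - a i < ε) :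
    (∃ i j : Fin n, i ≠ j ∧ a i = a j) ↔
    (∃ i j : Fin n,
      0 < (a j + ε * ((j : ℝ) + 1) / (2 * n)) - (a i + ε * ((i : ℝ) + 1) / (2 * n)) ∧
      (a j + ε * ((j : ℝ) + 1) / (2 * n)) - (a i + ε * ((i : ℝ) + 1) / (2 * n)) < ε / 2) :=
  perturbation_reduction_general (equallySpacedOffset_strictMono hε).injective
    (equallySpacedOffset_sub_lt_half hε) (by rwa [add_halves])
end
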